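/- Let v be a leaf of a complete d-ary tree of height h. The hitting time of a simple random walk from the ancestor of v at distance l from v to v equals g_{h,h}(d) - g_{h,h-l}(d), where g_{k,0}(d) = 0 and g_{k,m}(d) = (Σ_{i=0}^{m-1} (2m-2i) d^{k-i}) - m for m ≥ 1. -/

import Mathlib

open scoped Classical

/-- Transition probability of the simple random walk on `G`. -/
noncomputable def stepProb {V : Type*} [Fintype V] (G : SimpleGraph V) (a b : V) : ℝ :=
  if G.Adj a b then 1 / (G.degree a) else 0

/-- Probability that the simple random walk started at `u` follows the step sequence `w`. -/
noncomputable def walkProb {V : Type*} [Fintype V] (G : SimpleGraph V) :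
    (u : V) → {n : ℕ} → (Fin n → V) → ℝ
  | _, 0, _ => 1
  | u, n + 1, w => stepProb G u (w 0) * walkProb G (w 0) (fun i : Fin n => w i.succ)

/-- Probability that the walk started at `u` first reaches `v` at time exactly `n` (for `n ≥ 1`). -/
noncomputable def firstHitProb {V : Type*} [Fintype V] (G : SimpleGraph V) (u v : V) (n : ℕ) : ℝ :=
  ∑ w ∈ Finset.univ.filter (fun w : Fin n → V =>
      (∀ i : Fin n, (i : ℕ) + 1 < n → w i ≠ v) ∧ ∀ i : Fin n, (i : ℕ) + 1 = n → w i = v),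
    walkProb G u w

/-- Expected hitting time of `v` for the simple random walk on `G` started at `u`. -/
noncomputable def hittingTime {V : Type*} [Fintype V] (G : SimpleGraph V) (u v : V) : ℝ :=
  if u = v then 0 else ∑' n : ℕ, (n : ℝ) * firstHitProb G u v n

/-- Expected first return time to `v` of the simple random walk on `G` started at `v`. -/
noncomputable def expectedReturnTime {V : Type*} [Fintype V] (G : SimpleGraph V) (v : V) : ℝ :=
  ∑' n : ℕ, (n : ℝ) * firstHitProb G v v n
/-- The polynomial `g_{k,m}(d)` from the hitting-time formulas for complete `d`-ary trees. -/
noncomputable def g (k m : ℕ) (d : ℝ) : ℝ :=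
  if m = 0 then 0 else (∑ i ∈ Finset.range m, ((2 * m : ℝ) - 2 * i) * d ^ (k - i)) - m

/-- The complete `d`-ary tree of height `h`: vertices are sequences over `Fin d` of
length at most `h`, and a vertex is adjacent to each of its one-step extensions. -/
def daryTree (d h : ℕ) : SimpleGraph (Σ n : Fin (h + 1), Fin (n : ℕ) → Fin d) :=
  SimpleGraph.fromRel (fun x y =>
    ∃ _ : (x.1 : ℕ) + 1 = (y.1 : ℕ),
      ∀ i : Fin (x.1 : ℕ), y.2 ⟨i.val, by have := i.isLt; omega⟩ = x.2 i)

/-!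
A function `f` with `f v = 0` whose mean over the neighbours of each vertex `x ≠ v` is `f x - 1` is
the expected hitting time of `v`: the walk killed at `v` has a transition matrix `Q` with
`f = 1 + Q f`, so `Q ^ n` decays geometrically on `f`, and summing the series by parts gives `f`.

In a tree, crossing an edge in a given direction takes on average `2 s - 1` steps, where `s` is the
number of vertices on the starting side of the edge. Adding these values up along the path to `v`
yields a function `f` as above, whether or not `v` is a leaf. When the walk starts at an ancestor of
`v` every crossing is downwards, and the crossing from depth `k` to depth `k + 1` takes
`g h (k + 1) d - g h k d` steps.
-/

section NonnegMatrix

open Filter Finset Matrix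
open scoped Topology

variable {ι : Type*} [Fintype ι] {Q : Matrix ι ι ℝ} {f : ι → ℝ}

theorem mulVec_mono_of_nonneg (hQ : ∀ i j, 0 ≤ Q i j) : Monotone (Q *ᵥ ·) :=
  fun _ _ huw i ↦ dotProduct_le_dotProduct_of_nonneg_left huw (hQ i)

theorem one_le_of_eq_one_add_mulVec (hQ : ∀ i j, 0 ≤ Q i j) (hf : 0 ≤ f) (hfQ : f = 1 + Q *ᵥ f) :
    1 ≤ f := by
  have hQf : 0 ≤ Q *ᵥ f := by simpa using mulVec_mono_of_nonneg hQ hf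
  rw [hfQ]
  exact le_add_of_nonneg_right hQf

/-- Since `f ≤ C` for some constant `C`, the identity `Q f = f - 1` gives `Q f ≤ (1 - 1 / C) f`. -/
theorem exists_mulVec_le_smul (hfQ : f = 1 + Q *ᵥ f) : ∃ ρ ∈ Set.Ico (0 : ℝ) 1, Q *ᵥ f ≤ ρ • f := by
  obtain ⟨C, hC⟩ := (Set.finite_range f).bddAbove
  have hfC (i) : f i ≤ max C 1 := (hC (Set.mem_range_self i)).trans (le_max_left _ _)
  have hpos : 0 < max C 1 := zero_lt_one.trans_le (le_max_right _ _)
  refine ⟨1 - 1 / max C 1, ⟨?_, ?_⟩, fun i ↦ ?_⟩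
  · exact sub_nonneg.2 ((div_le_one hpos).2 (le_max_right _ _))
  · exact sub_lt_self _ (one_div_pos.2 hpos)
  · have hfi : f i = 1 + (Q *ᵥ f) i := congrFun hfQ i
    have hdiv : f i / max C 1 ≤ 1 := (div_le_one hpos).2 (hfC i)
    calc (Q *ᵥ f) i = f i - 1 := by linarith
      _ ≤ f i - f i / max C 1 := by linarith
      _ = (1 - 1 / max C 1) * f i := by ring

variable [DecidableEq ι]

theorem pow_mulVec_le_pow_smul (hQ : ∀ i j, 0 ≤ Q i j) {ρ : ℝ} (hρ : 0 ≤ ρ)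
    (hfρ : Q *ᵥ f ≤ ρ • f) (n : ℕ) : Q ^ n *ᵥ f ≤ ρ ^ n • f := by
  induction n with
  | zero => simp
  | succ n ih =>
    calc Q ^ (n + 1) *ᵥ f = Q *ᵥ (Q ^ n *ᵥ f) := by rw [pow_succ', mulVec_mulVec]
      _ ≤ Q *ᵥ (ρ ^ n • f) := mulVec_mono_of_nonneg hQ ih
      _ = ρ ^ n • (Q *ᵥ f) := mulVec_smul _ _ _
      _ ≤ ρ ^ n • (ρ • f) := smul_le_smul_of_nonneg_left hfρ (pow_nonneg hρ n)
      _ = ρ ^ (n + 1) • f := by rw [smul_smul, pow_succ]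

theorem pow_mulVec_nonneg (hQ : ∀ i j, 0 ≤ Q i j) {u : ι → ℝ} (hu : 0 ≤ u) (n : ℕ) :
    0 ≤ Q ^ n *ᵥ u := by
  induction n with
  | zero => simpa
  | succ n ih =>
    rw [pow_succ', ← mulVec_mulVec]
    simpa using mulVec_mono_of_nonneg hQ ih

theorem pow_mulVec_mono (hQ : ∀ i j, 0 ≤ Q i j) (n : ℕ) : Monotone (Q ^ n *ᵥ ·) := by
  intro u w huw
  simpa [mulVec_sub] using pow_mulVec_nonneg hQ (sub_nonneg.2 huw) n

theorem sum_range_succ_mul_pow_mulVec (hfQ : f = 1 + Q *ᵥ f) (N : ℕ) (i : ι) :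
    ∑ n ∈ range N, (n + 1 : ℝ) * (Q ^ n *ᵥ (1 - Q *ᵥ 1)) i =
      f i - (Q ^ N *ᵥ f) i - N * (Q ^ N *ᵥ 1) i := by
  induction N with
  | zero => simp
  | succ N ih =>
    have hf : (Q ^ N *ᵥ f) i = (Q ^ N *ᵥ 1) i + (Q ^ (N + 1) *ᵥ f) i := by
      conv_lhs => rw [hfQ, mulVec_add, mulVec_mulVec, ← pow_succ]
      rfl
    rw [sum_range_succ, ih, mulVec_sub, mulVec_mulVec, ← pow_succ, hf, Pi.sub_apply]
    push_cast
    ring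

/-- For a killed chain with transition matrix `Q`, the vector `1 - Q *ᵥ 1` holds the killing
probabilities, so the series is the mean lifetime. -/
theorem hasSum_succ_mul_pow_mulVec (hQ : ∀ i j, 0 ≤ Q i j) (hQ1 : Q *ᵥ 1 ≤ 1) (hf : 0 ≤ f)
    (hfQ : f = 1 + Q *ᵥ f) (i : ι) :
    HasSum (fun n : ℕ ↦ (n + 1 : ℝ) * (Q ^ n *ᵥ (1 - Q *ᵥ 1)) i) (f i) := by
  obtain ⟨ρ, ⟨hρ0, hρ1⟩, hfρ⟩ := exists_mulVec_le_smul hfQ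
  have hdecay (n : ℕ) : (Q ^ n *ᵥ f) i ≤ ρ ^ n * f i := pow_mulVec_le_pow_smul hQ hρ0 hfρ n i
  have hsurv_nonneg (n : ℕ) : 0 ≤ (Q ^ n *ᵥ 1) i := pow_mulVec_nonneg hQ zero_le_one n i
  have hsurv_le (n : ℕ) : (Q ^ n *ᵥ 1) i ≤ (Q ^ n *ᵥ f) i :=
    pow_mulVec_mono hQ n (one_le_of_eq_one_add_mulVec hQ hf hfQ) i
  have htail : Tendsto (fun n : ℕ ↦ (Q ^ n *ᵥ f) i) atTop (𝓝 0) :=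
    squeeze_zero (fun n ↦ pow_mulVec_nonneg hQ hf n i) hdecay
      (by simpa using (tendsto_pow_atTop_nhds_zero_of_lt_one hρ0 hρ1).mul_const (f i))
  have hsurv : Tendsto (fun n : ℕ ↦ n * (Q ^ n *ᵥ 1) i) atTop (𝓝 0) := by
    refine squeeze_zero (fun n ↦ mul_nonneg n.cast_nonneg (hsurv_nonneg n))
      (g := fun n : ℕ ↦ n * ρ ^ n * f i) (fun n ↦ ?_)
      (by simpa using (tendsto_self_mul_const_pow_of_lt_one hρ0 hρ1).mul_const (f i))
    rw [mul_assoc]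
    exact mul_le_mul_of_nonneg_left ((hsurv_le n).trans (hdecay n)) n.cast_nonneg
  rw [hasSum_iff_tendsto_nat_of_nonneg fun n ↦
    mul_nonneg n.cast_add_one_pos.le (pow_mulVec_nonneg hQ (sub_nonneg.2 hQ1) n i)]
  simpa [sum_range_succ_mul_pow_mulVec hfQ] using (tendsto_const_nhds.sub htail).sub hsurv

end NonnegMatrix

section HittingTime

open Finset Matrix

variable {V : Type*} [Fintype V] (G : SimpleGraph V) {u v : V} {f : V → ℝ}

theorem stepProb_nonneg (x y : V) : 0 ≤ stepProb G x y := by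
  unfold stepProb
  positivity

theorem sum_stepProb_mul (x : V) (f : V → ℝ) :
    ∑ y, stepProb G x y * f y = (∑ y ∈ G.neighborFinset x, f y) / G.degree x := by
  simp only [stepProb, ite_mul, zero_mul, G.neighborFinset_eq_filter, sum_filter, sum_div, ite_div,
    zero_div, one_div_mul_eq_div]

variable {G} in
theorem sum_stepProb {x : V} (hx : 0 < G.degree x) : ∑ y, stepProb G x y = 1 := by
  simpa [hx.ne'] using sum_stepProb_mul G x 1

variable {G} in
theorem eq_one_add_sum_stepProb_mul_iff {x : V} (hx : 0 < G.degree x) :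
    f x = 1 + ∑ y, stepProb G x y * f y ↔ ∑ y ∈ G.neighborFinset x, (f x - f y - 1) = 0 := by
  have hdeg : (G.degree x : ℝ) ≠ 0 := mod_cast hx.ne'
  rw [sum_stepProb_mul, sum_sub_distrib, sum_sub_distrib, sum_const, sum_const,
    G.card_neighborFinset_eq_degree, nsmul_eq_mul, nsmul_one, ← mul_right_inj' hdeg, mul_add,
    mul_div_cancel₀ _ hdeg, mul_one]
  constructor <;> intro h <;> linarith

theorem firstHitProb_one (u v : V) : firstHitProb G u v 1 = stepProb G u v := by
  rw [firstHitProb, sum_eq_single fun _ ↦ v]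
  · simp [walkProb]
  · intro w hw hne
    exact absurd (funext fun i ↦ (mem_filter.1 hw).2.2 i (by omega)) hne
  · simp

theorem firstHitProb_add_two (u v : V) (n : ℕ) :
    firstHitProb G u v (n + 2) =
      ∑ y : {y // y ≠ v}, stepProb G u y * firstHitProb G y v (n + 1) := by
  have hcons (y : V) (w : Fin (n + 1) → V) :
      ((∀ i : Fin (n + 2), (i : ℕ) + 1 < n + 2 → (Fin.cons y w : Fin (n + 2) → V) i ≠ v) ∧
        ∀ i : Fin (n + 2), (i : ℕ) + 1 = n + 2 → (Fin.cons y w : Fin (n + 2) → V) i = v) ↔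
      y ≠ v ∧ (∀ i : Fin (n + 1), (i : ℕ) + 1 < n + 1 → w i ≠ v) ∧
        ∀ i : Fin (n + 1), (i : ℕ) + 1 = n + 1 → w i = v := by
    simp [Fin.forall_fin_succ (n := n + 1), and_assoc]
  have hwalk (y : V) (w : Fin (n + 1) → V) :
      walkProb G u (Fin.cons y w : Fin (n + 2) → V) = stepProb G u y * walkProb G y w := by
    simp [walkProb]
  have hsplit (F : (Fin (n + 2) → V) → ℝ) :
      ∑ w, F w = ∑ y, ∑ w : Fin (n + 1) → V, F (Fin.cons y w) := by
    rw [← (Fin.consEquiv fun _ ↦ V).sum_comp, Fintype.sum_prod_type]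
    rfl
  simp only [firstHitProb, sum_filter, hsplit, hcons, hwalk]
  rw [Fintype.sum_eq_add_sum_subtype_ne _ v]
  simp [mul_sum, fun y : {y // y ≠ v} ↦ y.2]

/-- The transition matrix of the simple random walk on `G` killed on reaching `v`. -/
noncomputable def killedMatrix (v : V) : Matrix {x // x ≠ v} {x // x ≠ v} ℝ :=
  Matrix.of fun x y ↦ stepProb G x y

theorem firstHitProb_succ (v : V) (n : ℕ) (x : {x // x ≠ v}) :
    firstHitProb G x v (n + 1) = (killedMatrix G v ^ n *ᵥ fun y ↦ stepProb G y v) x := by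
  induction n generalizing x with
  | zero => simp [firstHitProb_one]
  | succ n ih =>
    rw [firstHitProb_add_two, pow_succ', ← mulVec_mulVec]
    simp only [ih]
    rfl

variable {G}

theorem stepProb_eq_one_sub_killedMatrix_mulVec_one (hdeg : ∀ x ≠ v, 0 < G.degree x) :
    (fun x : {x // x ≠ v} ↦ stepProb G x v) = 1 - killedMatrix G v *ᵥ 1 := by
  funext x
  have hsum := sum_stepProb (hdeg x x.2)
  rw [Fintype.sum_eq_add_sum_subtype_ne _ v] at hsum
  simpa [killedMatrix, mulVec, dotProduct] using eq_sub_of_add_eq hsum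

theorem killedMatrix_mulVec (hv : f v = 0) (x : {x // x ≠ v}) :
    (killedMatrix G v *ᵥ fun y ↦ f y) x = ∑ y, stepProb G x y * f y := by
  rw [Fintype.sum_eq_add_sum_subtype_ne _ v, hv, mul_zero, zero_add]
  rfl

/-- At a vertex other than `v` the average of `f` over the neighbours is `f x - 1`, so `f` attains
its minimum at `v`. -/
theorem nonneg_of_eq_one_add_sum_stepProb_mul (hdeg : ∀ x ≠ v, 0 < G.degree x) (hv : f v = 0)
    (hf : ∀ x ≠ v, f x = 1 + ∑ y, stepProb G x y * f y) : 0 ≤ f := by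
  have : Nonempty V := ⟨v⟩
  obtain ⟨x, hmin⟩ := Finite.exists_min f
  suffices hx : x = v from fun y ↦ by simpa [hx, hv] using hmin y
  by_contra hx
  have hle : f x ≤ ∑ y, stepProb G x y * f y := by
    calc f x = ∑ y, stepProb G x y * f x := by rw [← sum_mul, sum_stepProb (hdeg x hx), one_mul]
      _ ≤ ∑ y, stepProb G x y * f y :=
        sum_le_sum fun y _ ↦ mul_le_mul_of_nonneg_left (hmin y) (stepProb_nonneg G x y)
  linarith [hf x hx]

theorem hasSum_mul_firstHitProb (hdeg : ∀ x ≠ v, 0 < G.degree x) (hv : f v = 0)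
    (hf : ∀ x ≠ v, f x = 1 + ∑ y, stepProb G x y * f y) (hu : u ≠ v) :
    HasSum (fun n : ℕ ↦ n * firstHitProb G u v n) (f u) := by
  have hexit := stepProb_eq_one_sub_killedMatrix_mulVec_one hdeg
  have hexit_nonneg : 0 ≤ 1 - killedMatrix G v *ᵥ 1 := hexit ▸ fun x ↦ stepProb_nonneg G x v
  have hfQ : (fun x : {x // x ≠ v} ↦ f x) = 1 + killedMatrix G v *ᵥ fun x ↦ f x := by
    funext x
    rw [Pi.add_apply, killedMatrix_mulVec hv]
    exact hf x x.2
  have hsum := hasSum_succ_mul_pow_mulVec (Q := killedMatrix G v)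
    (fun x y ↦ stepProb_nonneg G x y) (sub_nonneg.1 hexit_nonneg)
    (fun x ↦ nonneg_of_eq_one_add_sum_stepProb_mul hdeg hv hf x) hfQ
    ⟨u, hu⟩
  rw [← hasSum_nat_add_iff' 1]
  simpa [← hexit, ← firstHitProb_succ] using hsum

theorem hittingTime_eq_of_sum_neighborFinset (hdeg : ∀ x ≠ v, 0 < G.degree x) (hv : f v = 0)
    (hf : ∀ x ≠ v, ∑ y ∈ G.neighborFinset x, (f x - f y - 1) = 0) (u : V) :
    hittingTime G u v = f u := by
  rw [hittingTime]
  split_ifs with hu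
  · rw [hu, hv]
  · exact (hasSum_mul_firstHitProb hdeg hv
      (fun x hx ↦ (eq_one_add_sum_stepProb_mul_iff (hdeg x hx)).2 (hf x hx)) hu).tsum_eq

end HittingTime

section SubtreeCard

open Finset

/-- The number `1 + d + ⋯ + d ^ (h - k)` of vertices lying weakly below a vertex at depth `k` of the
complete `d`-ary tree of height `h`. With `k = h + 1` it is `0`, so a leaf is not exceptional. -/
noncomputable def subtreeCard (h k : ℕ) (d : ℝ) : ℝ := ∑ i ∈ range (h + 1 - k), d ^ i

variable {h k m : ℕ} (d : ℝ)

theorem subtreeCard_eq_one_add_mul (hk : k ≤ h) :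
    subtreeCard h k d = 1 + d * subtreeCard h (k + 1) d := by
  rw [subtreeCard, subtreeCard, show h + 1 - k = h + 1 - (k + 1) + 1 by omega, sum_range_succ',
    mul_sum, add_comm]
  simp only [pow_succ', pow_zero]

theorem subtreeCard_eq_add_pow (hk : k ≤ h) :
    subtreeCard h k d = subtreeCard h (k + 1) d + d ^ (h - k) := by
  rw [subtreeCard, subtreeCard, show h + 1 - k = h - k + 1 by omega, sum_range_succ,
    Nat.add_sub_add_right]

theorem subtreeCard_zero_sub (hk : k ≤ h + 1) :
    subtreeCard h 0 d - subtreeCard h k d = ∑ i ∈ range k, d ^ (h - i) := by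
  induction k with
  | zero => simp
  | succ k ih =>
    rw [sum_range_succ, ← ih (by omega), subtreeCard_eq_add_pow d (by omega : k ≤ h)]
    ring

theorem g_succ (k m : ℕ) :
    g k (m + 1) d = g k m d + (2 * ∑ i ∈ range (m + 1), d ^ (k - i) - 1) := by
  have hg (m : ℕ) : g k m d = ∑ i ∈ range m, ((2 * m : ℝ) - 2 * i) * d ^ (k - i) - m := by
    rw [g]
    split_ifs with hm <;> simp [hm]
  rw [hg, hg, sum_range_succ, sum_range_succ, mul_add, mul_sum, ← add_sub_assoc]
  have hsum : ∑ i ∈ range m, ((2 * (m + 1 : ℕ) : ℝ) - 2 * i) * d ^ (k - i) =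
      ∑ i ∈ range m, ((2 * m : ℝ) - 2 * i) * d ^ (k - i) + ∑ i ∈ range m, 2 * d ^ (k - i) := by
    rw [← sum_add_distrib]
    refine sum_congr rfl fun i _ ↦ ?_
    push_cast
    ring
  rw [hsum]
  push_cast
  ring

theorem g_eq_sum_subtreeCard (hm : m ≤ h) :
    g h m d = ∑ j ∈ range m, (2 * (subtreeCard h 0 d - subtreeCard h (j + 1) d) - 1) := by
  induction m with
  | zero => simp [g]
  | succ m ih =>
    rw [g_succ, ← subtreeCard_zero_sub d (by omega : m + 1 ≤ h + 1), ih (by omega), sum_range_succ]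

end SubtreeCard

section Potential

open Finset

theorem sum_append_singleton_isPrefix {α M : Type*} [Fintype α] [DecidableEq α] [AddCommMonoid M]
    (l w : List α) (x : M) :
    (∑ c, if l ++ [c] <+: w then x else 0) = if l <+: w ∧ l ≠ w then x else 0 := by
  split_ifs with hl
  · obtain ⟨⟨_ | ⟨a, t⟩, rfl⟩, hne⟩ := hl
    · simp at hne
    · simp [List.prefix_append_right_inj, List.cons_prefix_cons]
  · refine sum_eq_zero fun c _ ↦ if_neg fun hc ↦ hl ⟨(l.prefix_append [c]).trans hc, ?_⟩
    rintro rfl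
    simpa using hc.length_le

variable {d : ℕ} (h : ℕ) (w l : List (Fin d))

/-- The increment of the expected hitting time of the vertex `w` of the complete `d`-ary tree of
height `h` when passing to the vertex `l` from its parent, vertices being regarded as words.
Crossing the edge upwards takes time `2 * subtreeCard h l.length d - 1` on average, and crossing it
in both directions takes twice the number `subtreeCard h 0 d - 1` of edges. -/
noncomputable def hittingIncrement : ℝ :=
  2 * subtreeCard h l.length d - 1 - if l <+: w then 2 * (subtreeCard h 0 d - 1) else 0

/-- The expected hitting time of the vertex `w` of the complete `d`-ary tree of height `h` from the
vertex `l`, up to a constant depending on `w`. -/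
noncomputable def hittingPotential : ℝ :=
  ∑ j ∈ range l.length, hittingIncrement h w (l.take (j + 1))

theorem hittingIncrement_nil : hittingIncrement h w [] = 1 := by
  rw [hittingIncrement, if_pos List.nil_prefix, List.length_nil]
  ring

theorem hittingPotential_append_singleton (c : Fin d) :
    hittingPotential h w (l ++ [c]) = hittingPotential h w l + hittingIncrement h w (l ++ [c]) := by
  rw [hittingPotential, hittingPotential, List.length_append, List.length_singleton, sum_range_succ,
    List.take_of_length_le (by simp)]
  congr 1
  refine sum_congr rfl fun j hj ↦ ?_
  rw [List.take_append_of_le_length (by simpa [Nat.succ_le_iff] using hj)]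

variable {h w l}

theorem hittingIncrement_of_length_eq_succ (hw : w.length ≤ h) (hl : l.length = h + 1) :
    hittingIncrement h w l = -1 := by
  have hlw : ¬ l <+: w := fun hlw ↦ by have := hlw.length_le; omega
  simp [hittingIncrement, subtreeCard, hl, hlw]

theorem hittingPotential_of_isPrefix (hl : l.length ≤ h) (hlw : l <+: w) :
    hittingPotential h w l = -g h l.length d := by
  rw [hittingPotential, g_eq_sum_subtreeCard _ hl, ← sum_neg_distrib]
  refine sum_congr rfl fun j hj ↦ ?_
  rw [hittingIncrement, if_pos ((l.take_prefix _).trans hlw), List.length_take,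
    min_eq_left (mem_range.1 hj)]
  ring

theorem hittingIncrement_sub_sum_append_singleton (hl : l.length ≤ h) (hlw : l ≠ w) :
    hittingIncrement h w l - 1 - ∑ c, (hittingIncrement h w (l ++ [c]) + 1) = 0 := by
  have hchild (c : Fin d) : hittingIncrement h w (l ++ [c]) + 1 =
      2 * subtreeCard h (l.length + 1) d -
        if l ++ [c] <+: w then 2 * (subtreeCard h 0 (d : ℝ) - 1) else 0 := by
    rw [hittingIncrement, List.length_append, List.length_singleton]
    ring
  simp only [hchild, sum_sub_distrib, sum_const, card_univ, Fintype.card_fin, nsmul_eq_mul,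
    sum_append_singleton_isPrefix, hlw, ne_eq, not_false_eq_true, and_true]
  rw [hittingIncrement, subtreeCard_eq_one_add_mul _ hl]
  ring

end Potential

section Tree

open Finset

variable {d h : ℕ}

variable (d h) in
/-- The vertices of the complete `d`-ary tree of height `h`. -/
abbrev DaryVertex : Type := Σ n : Fin (h + 1), Fin (n : ℕ) → Fin d

/-- The word of labels read along the path from the root to a vertex. -/
def word (x : DaryVertex d h) : List (Fin d) := List.ofFn x.2

/-- The vertex of the complete `d`-ary tree reached from the root by reading a word. -/
def ofWord (l : List (Fin d)) (hl : l.length ≤ h) : DaryVertex d h :=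
  ⟨⟨l.length, Nat.lt_succ_of_le hl⟩, l.get⟩

theorem length_word (x : DaryVertex d h) : (word x).length = x.1 := List.length_ofFn

theorem length_word_le (x : DaryVertex d h) : (word x).length ≤ h :=
  (length_word x).trans_le (Nat.le_of_lt_succ x.1.2)

theorem word_ofWord (l : List (Fin d)) (hl : l.length ≤ h) : word (ofWord l hl) = l :=
  List.ofFn_get l

theorem word_injective : Function.Injective (word : DaryVertex d h → List (Fin d)) := by
  rintro ⟨⟨n, hn⟩, x⟩ ⟨⟨m, hm⟩, y⟩ hxy
  obtain rfl : n = m := by simpa [length_word] using congrArg List.length hxy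
  exact congrArg _ (List.ofFn_injective hxy)

theorem word_isPrefix_iff {x y : DaryVertex d h} :
    word x <+: word y ↔ ∃ hle : (x.1 : ℕ) ≤ y.1, ∀ i, x.2 i = y.2 (Fin.castLE hle i) := by
  simp [List.prefix_iff_getElem, word, Fin.forall_iff, Fin.castLE]

/-- The relation holding when `y` is a child of `x` in the complete `d`-ary tree. -/
def IsChild (x y : DaryVertex d h) : Prop := ∃ c, word y = word x ++ [c]

theorem isChild_iff {x y : DaryVertex d h} :
    IsChild x y ↔ word x <+: word y ∧ (x.1 : ℕ) + 1 = y.1 := by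
  constructor
  · rintro ⟨c, hc⟩
    exact ⟨⟨[c], hc.symm⟩, by simpa [length_word] using (congrArg List.length hc).symm⟩
  · rintro ⟨⟨t, ht⟩, hlen⟩
    have ht1 : t.length = 1 := by
      have := congrArg List.length ht
      simp only [List.length_append, length_word] at this
      omega
    obtain ⟨c, rfl⟩ := List.length_eq_one_iff.1 ht1
    exact ⟨c, ht.symm⟩

theorem IsChild.not_symm {x y : DaryVertex d h} (hxy : IsChild x y) : ¬ IsChild y x := by
  rw [isChild_iff] at *
  omega

theorem daryTree_adj {x y : DaryVertex d h} :
    (daryTree d h).Adj x y ↔ IsChild x y ∨ IsChild y x := by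
  have hext (x y : DaryVertex d h) : (∃ _ : (x.1 : ℕ) + 1 = (y.1 : ℕ),
      ∀ i : Fin (x.1 : ℕ), y.2 ⟨i.val, by have := i.isLt; omega⟩ = x.2 i) ↔ IsChild x y := by
    rw [isChild_iff, word_isPrefix_iff]
    exact ⟨fun ⟨hlen, hi⟩ ↦ ⟨⟨by omega, fun i ↦ (hi i).symm⟩, hlen⟩,
      fun ⟨⟨_, hi⟩, hlen⟩ ↦ ⟨hlen, fun i ↦ (hi i).symm⟩⟩
  rw [daryTree, SimpleGraph.fromRel_adj, hext, hext, and_iff_right_iff_imp]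
  rintro (hxy | hxy) rfl <;> exact hxy.not_symm hxy

theorem isChild_iff_eq_ofWord_dropLast {x y : DaryVertex d h} (hx : word x ≠ []) :
    IsChild y x ↔ y = ofWord (word x).dropLast
      ((List.dropLast_sublist _).length_le.trans (length_word_le x)) := by
  rw [← word_injective.eq_iff, word_ofWord]
  constructor
  · rintro ⟨c, hc⟩
    rw [hc, List.dropLast_concat]
  · intro hy
    exact ⟨_, by rw [hy, List.dropLast_append_getLast hx]⟩

theorem sum_children (x : DaryVertex d h) (φ : List (Fin d) → ℝ) :
    ∑ y with IsChild x y, φ (word y) =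
      if (word x).length < h then ∑ c, φ (word x ++ [c]) else 0 := by
  split_ifs with hx
  · refine (sum_bij (fun c _ ↦ ofWord (word x ++ [c]) (by simpa)) ?_ ?_ ?_ ?_).symm
    · exact fun c _ ↦ mem_filter.2 ⟨mem_univ _, c, word_ofWord _ _⟩
    · intro c _ c' _ heq
      simpa [word_ofWord] using congrArg word heq
    · intro y hy
      obtain ⟨c, hc⟩ := (mem_filter.1 hy).2
      exact ⟨c, mem_univ c, word_injective (by rw [word_ofWord, hc])⟩
    · simp [word_ofWord]
  · refine sum_eq_zero fun y hy ↦ absurd ?_ hx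
    obtain ⟨c, hc⟩ := (mem_filter.1 hy).2
    simpa [hc] using length_word_le y

theorem sum_parent (x : DaryVertex d h) (φ : List (Fin d) → ℝ) :
    ∑ y with IsChild y x, φ (word y) = if word x = [] then 0 else φ (word x).dropLast := by
  split_ifs with hx
  · simp [IsChild, hx]
  · simp [isChild_iff_eq_ofWord_dropLast hx, filter_eq', word_ofWord]

theorem sum_neighborFinset_daryTree (x : DaryVertex d h) (φ : List (Fin d) → ℝ) :
    ∑ y ∈ (daryTree d h).neighborFinset x, φ (word y) =
      (if word x = [] then 0 else φ (word x).dropLast) +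
        if (word x).length < h then ∑ c, φ (word x ++ [c]) else 0 := by
  have hdisj : Disjoint (univ.filter fun y ↦ IsChild y x) (univ.filter (IsChild x)) :=
    disjoint_filter.2 fun y _ hy ↦ hy.not_symm
  rw [← sum_parent, ← sum_children, ← sum_union hdisj, ← filter_or]
  congr 1
  ext y
  simp [daryTree_adj, or_comm]

theorem degree_daryTree_pos {x v : DaryVertex d h} (hxv : x ≠ v) :
    0 < (daryTree d h).degree x := by
  simp only [SimpleGraph.degree_pos_iff_exists_adj, daryTree_adj]
  by_cases hx : word x = []
  · have hv : word v ≠ [] := fun hv ↦ hxv (word_injective (hx.trans hv.symm))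
    have hlen : [(word v).head hv].length ≤ h :=
      (List.length_pos_iff.2 hv).trans_le (length_word_le v)
    exact ⟨ofWord _ hlen, .inl ⟨_, by rw [word_ofWord, hx, List.nil_append]⟩⟩
  · exact ⟨_, .inr ((isChild_iff_eq_ofWord_dropLast hx).2 rfl)⟩

theorem sum_neighborFinset_hittingPotential {x v : DaryVertex d h} (hxv : x ≠ v) :
    ∑ y ∈ (daryTree d h).neighborFinset x, (hittingPotential h (word v) (word x) -
      hittingPotential h (word v) (word y) - 1) = 0 := by
  have hparent : (if word x = [] then 0 else hittingPotential h (word v) (word x) -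
      hittingPotential h (word v) (word x).dropLast - 1) =
      hittingIncrement h (word v) (word x) - 1 := by
    split_ifs with hx
    · rw [hx, hittingIncrement_nil, sub_self]
    · have := hittingPotential_append_singleton h (word v) (word x).dropLast ((word x).getLast hx)
      rw [List.dropLast_append_getLast hx] at this
      linarith
  have hchildren : (if (word x).length < h then ∑ c, (hittingPotential h (word v) (word x) -
      hittingPotential h (word v) (word x ++ [c]) - 1) else 0) =
      -∑ c, (hittingIncrement h (word v) (word x ++ [c]) + 1) := by
    rw [← sum_neg_distrib]
    split_ifs with hx
    · refine sum_congr rfl fun c _ ↦ ?_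
      rw [hittingPotential_append_singleton]
      ring
    · have hleaf : (word x).length = h := (length_word_le x).antisymm (not_lt.1 hx)
      refine (sum_eq_zero fun c _ ↦ ?_).symm
      rw [hittingIncrement_of_length_eq_succ (length_word_le v) (by simp [hleaf])]
      norm_num
  rw [sum_neighborFinset_daryTree x fun l ↦ hittingPotential h (word v) (word x) -
    hittingPotential h (word v) l - 1, hparent, hchildren, ← sub_eq_add_neg]
  exact hittingIncrement_sub_sum_append_singleton (length_word_le x) (word_injective.ne hxv)

theorem hittingTime_daryTree (u v : DaryVertex d h) :
    hittingTime (daryTree d h) u v =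
      hittingPotential h (word v) (word u) - hittingPotential h (word v) (word v) :=
  hittingTime_eq_of_sum_neighborFinset
    (f := fun x ↦ hittingPotential h (word v) (word x) - hittingPotential h (word v) (word v))
    (fun _ ↦ degree_daryTree_pos) (sub_self _)
    (fun x hx ↦ by simpa using sum_neighborFinset_hittingPotential hx) u

end Tree

theorem stmt_15_general {d h : ℕ} (a v : DaryVertex d h) (hle : (a.1 : ℕ) ≤ v.1)
    (hanc : ∀ i, a.2 i = v.2 (Fin.castLE hle i)) :
    hittingTime (daryTree d h) a v = g h v.1 d - g h a.1 d := by
  have hav : word a <+: word v := word_isPrefix_iff.2 ⟨hle, hanc⟩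
  rw [hittingTime_daryTree, hittingPotential_of_isPrefix (length_word_le a) hav,
    hittingPotential_of_isPrefix (length_word_le v) (List.prefix_refl _), length_word, length_word]
  ring

theorem stmt_15 (d h : ℕ) (hd : 1 ≤ d)
    (v : Σ n : Fin (h + 1), Fin (n : ℕ) → Fin d) (hv : (v.1 : ℕ) = h)
    (l : ℕ) (hl : l ≤ h)
    (a : Σ n : Fin (h + 1), Fin (n : ℕ) → Fin d) (ha : (a.1 : ℕ) = h - l)
    (hanc : ∀ i : Fin (a.1 : ℕ), a.2 i = v.2 ⟨i.val, by have := i.isLt; omega⟩) :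
    hittingTime (daryTree d h) a v = g h h d - g h (h - l) d := by
  simpa only [hv, ha] using stmt_15_general a v (by omega) hanc
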